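/- arXiv:1306.2748 — 2 statements merged into one kernel-verified Lean document; each statement's English description precedes it below -/
import Mathlib

section
/- For a prime p > 2 and integer N, the count L(N,p) of quadruples (b₁,…,b₄) modulo p with b₁²+b₂²+b₃²+b₄² ≡ N (mod p) and b₁b₂b₃b₄ ≡ −1 (mod p) satisfies |L(N,p) − p²| ≤ 30·p^{3/2}. -/
/-! Sending a unit `b` to `(b ^ k, b)` in the abelian group `F × Fˣ` turns the solutions of
`∑ bᵢ ^ k = x`, `∏ bᵢ = y` into the representations of `(x, y)` as a sum of `n` such points. By
Parseval, the mean square deviation of the number of representations from its average is controlled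
by the exponential sums `∑ b, χ b * φ (b ^ k)`. The dilation `b ↦ l * b` permutes these points, and
it serves twice. Applied to `φ`, it shows that an exponential sum has the same absolute value along
the orbit of `φ`, so that the mean square over all `φ` bounds it by `k * √q` and Weil's theorem is
not needed. Applied to the solutions, it shows that the number of representations is constant along
the orbit of points `(l ^ k * x, l ^ n * y)`, at most `n` to one in `l`, which turns the mean square
bound into a pointwise one. -/

open Finset ComplexConjugate

section FiniteAbelianGroup

variable {A ι : Type*} [AddCommGroup A] [Fintype A] [Fintype ι]

theorem sum_norm_sq_sum_mul_addChar (g : A → ℂ) :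
    ∑ ψ : AddChar A ℂ, ‖∑ a, g a * ψ a‖ ^ 2 = Fintype.card A * ∑ a, ‖g a‖ ^ 2 := by
  classical
  have correlation (ψ : AddChar A ℂ) : (‖∑ a, g a * ψ a‖ ^ 2 : ℂ) =
      ∑ a, ∑ b, g a * conj (g b) * ψ (a - b) := by
    rw [← Complex.mul_conj', map_sum, sum_mul_sum]
    refine sum_congr rfl fun a _ => sum_congr rfl fun b _ => ?_
    rw [map_mul, ← AddChar.map_neg_eq_conj, sub_eq_add_neg, AddChar.map_add_eq_mul]
    ring
  have orthogonality (a b : A) : ∑ ψ : AddChar A ℂ, g a * conj (g b) * ψ (a - b) =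
      if a = b then Fintype.card A * (‖g a‖ ^ 2 : ℂ) else 0 := by
    rw [← mul_sum, AddChar.sum_apply_eq_ite, ← Complex.mul_conj']
    split_ifs <;> simp_all [sub_eq_zero, mul_comm]
  apply Complex.ofReal_injective
  push_cast
  simp_rw [correlation]
  rw [sum_comm, mul_sum]
  refine sum_congr rfl fun a _ => ?_
  rw [sum_comm]
  simp [orthogonality]

theorem sum_norm_sq_sum_mul_addChar_comp_le [DecidableEq A] {f : ι → A} {m : ℕ}
    (hf : ∀ a, #{i | f i = a} ≤ m) (w : ι → ℂ) :
    ∑ ψ : AddChar A ℂ, ‖∑ i, w i * ψ (f i)‖ ^ 2 ≤ Fintype.card A * (m * ∑ i, ‖w i‖ ^ 2) := by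
  set g : A → ℂ := fun a => ∑ i with f i = a, w i
  have collect (ψ : AddChar A ℂ) : ∑ i, w i * ψ (f i) = ∑ a, g a * ψ a := by
    rw [← sum_fiberwise univ f]
    refine sum_congr rfl fun a _ => ?_
    rw [sum_mul]
    exact sum_congr rfl fun i hi => by rw [(mem_filter.1 hi).2]
  have fiber (a : A) : ‖g a‖ ^ 2 ≤ m * ∑ i with f i = a, ‖w i‖ ^ 2 :=
    calc ‖g a‖ ^ 2 ≤ (∑ i with f i = a, ‖w i‖) ^ 2 := by gcongr; exact norm_sum_le _ _
      _ ≤ #{i | f i = a} * ∑ i with f i = a, ‖w i‖ ^ 2 := sq_sum_le_card_mul_sum_sq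
      _ ≤ m * ∑ i with f i = a, ‖w i‖ ^ 2 := by gcongr; exact hf a
  simp_rw [collect]
  rw [sum_norm_sq_sum_mul_addChar, ← sum_fiberwise univ f, mul_sum univ _ (m : ℝ)]
  gcongr with a
  exact fiber a

end FiniteAbelianGroup

theorem card_mul_le_mul_sum_of_card_fiber_le {α β R : Type*} [Fintype α] [Fintype β]
    [DecidableEq β] [Semiring R] [PartialOrder R] [IsOrderedRing R] {u : α → β} {m : ℕ}
    (hu : ∀ b, #{a | u a = b} ≤ m) {g : β → R} (hg : ∀ b, 0 ≤ g b) {c : R}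
    (hc : ∀ a, c ≤ g (u a)) : Fintype.card α * c ≤ m * ∑ b, g b :=
  calc Fintype.card α * c ≤ ∑ a, g (u a) := by
        simpa using card_nsmul_le_sum univ (fun a => g (u a)) c fun a _ => hc a
    _ = ∑ b, #{a | u a = b} * g b := by simp [← sum_fiberwise' univ u g]
    _ ≤ ∑ b, m * g b := by gcongr with b; exacts [hg b, hu b]
    _ = m * ∑ b, g b := (mul_sum _ _ _).symm

section Representations

variable {A ι : Type*} [DecidableEq A] [Fintype ι]

/-- The number of representations of `a` as an ordered sum of `n` values of `f`. -/
def repCount [AddCommMonoid A] (f : ι → A) (n : ℕ) (a : A) : ℕ :=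
  #{b : Fin n → ι | ∑ i, f (b i) = a}

theorem sum_repCount_mul_addChar [AddCommMonoid A] [Fintype A] {R : Type*} [CommSemiring R]
    (f : ι → A) (n : ℕ) (ψ : AddChar A R) :
    ∑ a, repCount f n a * ψ a = (∑ i, ψ (f i)) ^ n := by
  have addChar_sum (b : Fin n → ι) : ψ (∑ i, f (b i)) = ∏ i, ψ (f (b i)) :=
    map_prod ψ.toMonoidHom (fun i => Multiplicative.ofAdd (f (b i))) univ
  rw [Fintype.sum_pow]
  simp_rw [← addChar_sum, repCount]
  rw [← sum_fiberwise' univ (fun b : Fin n → ι => ∑ i, f (b i)) ψ]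
  simp

variable [AddCommGroup A] [Fintype A]

theorem sum_repCount_sub_mean_mul_addChar (f : ι → A) (n : ℕ) (ψ : AddChar A ℂ) :
    ∑ a, ((repCount f n a : ℂ) - Fintype.card ι ^ n / Fintype.card A) * ψ a =
      if ψ = 0 then 0 else (∑ i, ψ (f i)) ^ n := by
  simp_rw [sub_mul, sum_sub_distrib, sum_repCount_mul_addChar, ← mul_sum, AddChar.sum_eq_ite]
  split_ifs with hψ <;> simp [hψ]

theorem sum_sq_repCount_sub_mean_le {f : ι → A} {m : ℕ} (hf : ∀ a, #{i | f i = a} ≤ m) {B : ℝ}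
    (hB : ∀ ψ : AddChar A ℂ, ψ ≠ 0 → ‖∑ i, ψ (f i)‖ ≤ B) (n : ℕ) :
    ∑ a, ((repCount f (n + 1) a : ℝ) - Fintype.card ι ^ (n + 1) / Fintype.card A) ^ 2 ≤
      m * Fintype.card ι * (B ^ n) ^ 2 := by
  set Δ : A → ℝ := fun a => repCount f (n + 1) a - Fintype.card ι ^ (n + 1) / Fintype.card A
  have transform_le (ψ : AddChar A ℂ) :
      ‖∑ a, (Δ a : ℂ) * ψ a‖ ^ 2 ≤ (B ^ n) ^ 2 * ‖∑ i, ψ (f i)‖ ^ 2 := by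
    push_cast [Δ]
    rw [sum_repCount_sub_mean_mul_addChar]
    split_ifs with hψ
    · simpa using by positivity
    · rw [norm_pow, pow_succ ‖_‖, mul_pow]
      gcongr
      exact hB ψ hψ
  have second_moment : ∑ ψ : AddChar A ℂ, ‖∑ i, ψ (f i)‖ ^ 2 ≤
      Fintype.card A * (m * Fintype.card ι) := by
    simpa using sum_norm_sq_sum_mul_addChar_comp_le hf fun _ => 1
  refine le_of_mul_le_mul_left ?_ (Nat.cast_pos.2 (Fintype.card_pos (α := A)) : (0 : ℝ) < _)
  calc Fintype.card A * ∑ a, Δ a ^ 2 = ∑ ψ : AddChar A ℂ, ‖∑ a, (Δ a : ℂ) * ψ a‖ ^ 2 := by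
        simp [sum_norm_sq_sum_mul_addChar]
    _ ≤ (B ^ n) ^ 2 * ∑ ψ : AddChar A ℂ, ‖∑ i, ψ (f i)‖ ^ 2 := by
        rw [mul_sum]
        exact sum_le_sum fun ψ _ => transform_le ψ
    _ ≤ (B ^ n) ^ 2 * (Fintype.card A * (m * Fintype.card ι)) := by gcongr
    _ = Fintype.card A * (m * Fintype.card ι * (B ^ n) ^ 2) := by ring

end Representations

theorem card_units_val_pow_eq_le {R : Type*} [CommRing R] [IsDomain R] [Fintype Rˣ] [DecidableEq R]
    {k : ℕ} (hk : 0 < k) (a : R) : #{u : Rˣ | (u : R) ^ k = a} ≤ k :=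
  calc #{u : Rˣ | (u : R) ^ k = a} ≤ #(Polynomial.nthRoots k a).toFinset :=
        card_le_card_of_injOn (fun u => (u : R)) (by intro u; simp [Polynomial.mem_nthRoots hk])
          Units.val_injective.injOn
    _ ≤ (Polynomial.nthRoots k a).card := Multiset.toFinset_card_le _
    _ ≤ k := Polynomial.card_nthRoots k a

/-- The point `(u ^ k, u)` of `M × Mˣ`, with the unit group written additively so that a sum of
such points records both `∑ uᵢ ^ k` and `∏ uᵢ`. -/
def powPoint {M : Type*} [Monoid M] (k : ℕ) (u : Mˣ) : M × Additive Mˣ := ((u : M) ^ k, .ofMul u)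

theorem sum_powPoint_eq_iff {R ι : Type*} [CommSemiring R] [Fintype ι] {k : ℕ} {b : ι → Rˣ}
    {a : R × Additive Rˣ} :
    ∑ i, powPoint k (b i) = a ↔ ∑ i, (b i : R) ^ k = a.1 ∧ ∏ i, b i = a.2.toMul := by
  simp [powPoint, Prod.ext_iff, Prod.fst_sum, Prod.snd_sum, ← ofMul_prod, ← Equiv.eq_symm_apply]

theorem powPoint_injective {M : Type*} [Monoid M] (k : ℕ) :
    Function.Injective (powPoint (M := M) k) := fun _ _ h =>
  Additive.ofMul.injective (congrArg Prod.snd h)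

theorem repCount_powPoint_dilate {R : Type*} [CommSemiring R] [DecidableEq R] [Fintype Rˣ]
    (k n : ℕ) (l : Rˣ) (a : R × Additive Rˣ) :
    repCount (powPoint k) n ((l : R) ^ k * a.1, n • .ofMul l + a.2) =
      repCount (powPoint k) n a := by
  refine (card_equiv (Equiv.mulLeft fun _ => l) fun b => ?_).symm
  simp [sum_powPoint_eq_iff, mul_pow, ← mul_sum, prod_mul_distrib, (l.isUnit.pow k).mul_right_inj]

theorem card_dilate_eq_le {R : Type*} [CommRing R] [IsDomain R] [DecidableEq R] [Fintype Rˣ]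
    (k : ℕ) {n : ℕ} (hn : 0 < n) (a x : R × Additive Rˣ) :
    #{l : Rˣ | ((l : R) ^ k * a.1, n • .ofMul l + a.2) = x} ≤ n := by
  refine (card_le_card fun l hl => ?_).trans
    (card_units_val_pow_eq_le hn ((x.2 - a.2).toMul : R))
  obtain rfl := (mem_filter.1 hl).2
  simp

theorem card_sum_pow_eq_and_prod_eq {R : Type*} [CommSemiring R] [Fintype R] [DecidableEq R]
    (k n : ℕ) (x : R) (y : Rˣ) :
    #{b : Fin n → R | ∑ i, b i ^ k = x ∧ ∏ i, b i = y} =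
      repCount (powPoint k) n (x, .ofMul y) := by
  refine (card_nbij (fun b i => (b i : R)) (fun b hb => ?_) (fun b _ c _ h => ?_)
    fun b hb => ?_).symm
  · simpa [sum_powPoint_eq_iff, Units.ext_iff] using hb
  · exact funext fun i => Units.ext (congrFun h i)
  · simp only [coe_filter, mem_univ, true_and, Set.mem_ofPred_eq] at hb
    have isUnit (i : Fin n) : IsUnit (b i) :=
      isUnit_of_dvd_unit (dvd_prod_of_mem b (mem_univ i)) (hb.2 ▸ y.isUnit)
    lift b to Fin n → Rˣ using isUnit
    exact ⟨b, by simpa [sum_powPoint_eq_iff, Units.ext_iff] using hb, rfl⟩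

theorem norm_sum_addChar_mul_mulShift_pow {R : Type*} [CommRing R] [Fintype Rˣ] (k : ℕ)
    (χ : AddChar (Additive Rˣ) ℂ) (φ : AddChar R ℂ) (l : Rˣ) :
    ‖∑ b : Rˣ, χ (.ofMul b) * φ.mulShift ((l : R) ^ k) ((b : R) ^ k)‖ =
      ‖∑ b : Rˣ, χ (.ofMul b) * φ ((b : R) ^ k)‖ := by
  have dilate : χ (.ofMul l) * ∑ b : Rˣ, χ (.ofMul b) * φ.mulShift ((l : R) ^ k) ((b : R) ^ k) =
      ∑ b : Rˣ, χ (.ofMul b) * φ ((b : R) ^ k) := by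
    rw [mul_sum, ← Equiv.sum_comp (Equiv.mulLeft l) fun b : Rˣ => χ (.ofMul b) * φ ((b : R) ^ k)]
    refine sum_congr rfl fun b _ => ?_
    simp [AddChar.map_add_eq_mul, mul_pow, mul_assoc]
  rw [← dilate, norm_mul, AddChar.norm_apply, one_mul]

section FiniteField

variable {F : Type*} [Field F] [Fintype F] [DecidableEq F] {k : ℕ}

theorem card_mulShift_pow_eq_le (hk : 0 < k) {φ : AddChar F ℂ} (hφ : φ ≠ 0) (θ : AddChar F ℂ) :
    #{l : Fˣ | φ.mulShift ((l : F) ^ k) = θ} ≤ k := by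
  by_cases hθ : ∃ a, φ.mulShift a = θ
  · obtain ⟨a, rfl⟩ := hθ
    have inj := AddChar.to_mulShift_inj_of_isPrimitive (AddChar.IsPrimitive.of_ne_one hφ)
    simpa only [inj.eq_iff] using card_units_val_pow_eq_le hk a
  · rw [filter_false_of_mem fun l _ hl => hθ ⟨_, hl⟩]
    simp

theorem norm_sum_addChar_mul_addChar_pow_le (hk : 0 < k) (χ : AddChar (Additive Fˣ) ℂ)
    {φ : AddChar F ℂ} (hφ : φ ≠ 0) :
    ‖∑ b : Fˣ, χ (.ofMul b) * φ ((b : F) ^ k)‖ ≤ k * √(Fintype.card F) := by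
  set S : AddChar F ℂ → ℂ := fun θ => ∑ b : Fˣ, χ (.ofMul b) * θ ((b : F) ^ k)
  have orbit : Fintype.card Fˣ * ‖S φ‖ ^ 2 ≤ k * ∑ θ, ‖S θ‖ ^ 2 :=
    card_mul_le_mul_sum_of_card_fiber_le (card_mulShift_pow_eq_le hk hφ)
      (fun _ => sq_nonneg _) fun l => by rw [norm_sum_addChar_mul_mulShift_pow]
  have second_moment : ∑ θ, ‖S θ‖ ^ 2 ≤ Fintype.card F * (k * Fintype.card Fˣ) := by
    simpa using sum_norm_sq_sum_mul_addChar_comp_le (card_units_val_pow_eq_le hk)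
      fun b : Fˣ => χ (.ofMul b)
  refine le_of_sq_le_sq ?_ (by positivity)
  refine le_of_mul_le_mul_left ?_ (Nat.cast_pos.2 (Fintype.card_pos (α := Fˣ)) : (0 : ℝ) < _)
  calc Fintype.card Fˣ * ‖S φ‖ ^ 2 ≤ k * ∑ θ, ‖S θ‖ ^ 2 := orbit
    _ ≤ k * (Fintype.card F * (k * Fintype.card Fˣ)) := by gcongr
    _ = Fintype.card Fˣ * (k * √(Fintype.card F)) ^ 2 := by
        rw [mul_pow, Real.sq_sqrt (by positivity)]
        ring

theorem norm_sum_addChar_powPoint_le (hk : 0 < k) {ψ : AddChar (F × Additive Fˣ) ℂ} (hψ : ψ ≠ 0) :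
    ‖∑ b : Fˣ, ψ (powPoint k b)‖ ≤ k * √(Fintype.card F) := by
  set φ : AddChar F ℂ := ψ.compAddMonoidHom (AddMonoidHom.inl F (Additive Fˣ))
  set χ : AddChar (Additive Fˣ) ℂ := ψ.compAddMonoidHom (AddMonoidHom.inr F (Additive Fˣ))
  have split (x : F) (y : Additive Fˣ) : ψ (x, y) = χ y * φ x := by
    simp [φ, χ, ← AddChar.map_add_eq_mul]
  simp only [powPoint, split]
  by_cases hφ : φ = 0
  · have hχ : χ ≠ 0 := fun hχ => hψ (by ext ⟨x, y⟩; simp [split, hφ, hχ])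
    have cancel : ∑ b : Fˣ, χ (.ofMul b) = 0 :=
      (Equiv.sum_comp Additive.ofMul χ).trans (AddChar.sum_eq_zero_iff_ne_zero.2 hχ)
    simpa [hφ, cancel] using by positivity
  · exact norm_sum_addChar_mul_addChar_pow_le hk χ hφ

theorem sum_sq_repCount_powPoint_sub_le (hk : 0 < k) (n : ℕ) :
    ∑ a : F × Additive Fˣ,
        ((repCount (powPoint k) (n + 1) a : ℝ) - Fintype.card Fˣ ^ n / Fintype.card F) ^ 2 ≤
      Fintype.card Fˣ * ((k * √(Fintype.card F)) ^ n) ^ 2 := by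
  have mean : (Fintype.card Fˣ : ℝ) ^ (n + 1) / Fintype.card (F × Additive Fˣ) =
      Fintype.card Fˣ ^ n / Fintype.card F := by
    rw [Fintype.card_prod, Fintype.card_congr Additive.toMul, Nat.cast_mul, pow_succ,
      mul_div_mul_right _ _ (Nat.cast_ne_zero.2 Fintype.card_ne_zero)]
  have fiber (a : F × Additive Fˣ) : #{b : Fˣ | powPoint k b = a} ≤ 1 :=
    card_le_one.2 fun b hb c hc => powPoint_injective k
      ((mem_filter.1 hb).2.trans (mem_filter.1 hc).2.symm)
  simpa only [mean, Nat.cast_one, one_mul] using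
    sum_sq_repCount_sub_mean_le fiber (fun _ => norm_sum_addChar_powPoint_le hk) n

theorem abs_repCount_powPoint_sub_le (hk : 0 < k) (n : ℕ) (a : F × Additive Fˣ) :
    |(repCount (powPoint k) (n + 1) a : ℝ) - Fintype.card Fˣ ^ n / Fintype.card F| ≤
      √(n + 1) * (k * √(Fintype.card F)) ^ n := by
  set Δ : F × Additive Fˣ → ℝ := fun x =>
    repCount (powPoint k) (n + 1) x - Fintype.card Fˣ ^ n / Fintype.card F
  have orbit : Fintype.card Fˣ * Δ a ^ 2 ≤ (n + 1 : ℕ) * ∑ x, Δ x ^ 2 :=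
    card_mul_le_mul_sum_of_card_fiber_le (card_dilate_eq_le k n.succ_pos a)
      (fun _ => sq_nonneg _) fun l => by simp only [Δ, repCount_powPoint_dilate, le_refl]
  refine abs_le_of_sq_le_sq ?_ (by positivity)
  refine le_of_mul_le_mul_left ?_ (Nat.cast_pos.2 (Fintype.card_pos (α := Fˣ)) : (0 : ℝ) < _)
  calc Fintype.card Fˣ * Δ a ^ 2 ≤ (n + 1 : ℕ) * ∑ x, Δ x ^ 2 := orbit
    _ ≤ (n + 1 : ℕ) * (Fintype.card Fˣ * ((k * √(Fintype.card F)) ^ n) ^ 2) := by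
        gcongr
        exact sum_sq_repCount_powPoint_sub_le hk n
    _ = Fintype.card Fˣ * (√(n + 1) * (k * √(Fintype.card F)) ^ n) ^ 2 := by
        rw [mul_pow √_, Real.sq_sqrt (by positivity)]
        push_cast
        ring

theorem abs_card_sum_pow_eq_and_prod_eq_sub_le (hk : 0 < k) (n : ℕ) (x : F) {y : F} (hy : y ≠ 0) :
    |(#{b : Fin (n + 1) → F | ∑ i, b i ^ k = x ∧ ∏ i, b i = y} : ℝ) -
        ((Fintype.card F : ℝ) - 1) ^ n / Fintype.card F| ≤
      √(n + 1) * (k * √(Fintype.card F)) ^ n := by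
  lift y to Fˣ using hy.isUnit
  rw [card_sum_pow_eq_and_prod_eq]
  have hunits : (Fintype.card Fˣ : ℝ) = Fintype.card F - 1 := by
    rw [Fintype.card_units, Nat.cast_pred Fintype.card_pos]
  exact hunits ▸ abs_repCount_powPoint_sub_le hk n _

theorem L_asymptotic_general (hk : 0 < k) (x : F) {y : F} (hy : y ≠ 0) :
    |(#{b : Fin 4 → F | ∑ i, b i ^ k = x ∧ ∏ i, b i = y} : ℝ) - (Fintype.card F : ℝ) ^ 2| ≤
      (2 * k ^ 3 + 3) * (Fintype.card F : ℝ) ^ ((3 : ℝ) / 2) := by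
  have deviation := abs_card_sum_pow_eq_and_prod_eq_sub_le hk 3 x hy
  have hq : (1 : ℝ) ≤ Fintype.card F := mod_cast Fintype.card_pos
  set q : ℝ := (Fintype.card F : ℝ)
  have hpow : q ^ ((3 : ℝ) / 2) = √q ^ 3 := by
    rw [Real.sqrt_eq_rpow, ← Real.rpow_mul_natCast (by positivity)]
    norm_num
  have main_term : |(q - 1) ^ 3 / q - q ^ 2| ≤ 3 * √q ^ 3 := by
    have expand : (q - 1) ^ 3 / q - q ^ 2 = -3 * q + (3 - q⁻¹) := by
      field_simp
      ring
    have hinv : q⁻¹ ≤ 1 := inv_le_one_of_one_le₀ hq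
    have hinv_pos : 0 < q⁻¹ := by positivity
    have hsqrt : q ≤ √q ^ 3 := by
      rw [pow_succ, Real.sq_sqrt (by positivity)]
      exact le_mul_of_one_le_right (by positivity) (Real.one_le_sqrt.2 hq)
    rw [expand, abs_le]
    constructor <;> linarith
  have hsqrt_four : √((3 : ℕ) + 1 : ℝ) = 2 := by
    rw [Real.sqrt_eq_iff_mul_self_eq] <;> norm_num
  calc _ ≤ _ + _ := abs_sub_le _ ((q - 1) ^ 3 / q) _
    _ ≤ √((3 : ℕ) + 1 : ℝ) * (k * √q) ^ 3 + 3 * √q ^ 3 := add_le_add deviation main_term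
    _ = (2 * k ^ 3 + 3) * q ^ ((3 : ℝ) / 2) := by
        rw [hsqrt_four, hpow]
        ring

end FiniteField

/-- |L(N,p) − p²| ≤ 30·p^{3/2}, where L(N,p) counts quadruples mod p with
∑ bᵢ² ≡ N and ∏ bᵢ ≡ −1 (mod p). -/
theorem L_asymptotic (p : ℕ) [Fact p.Prime] (hp2 : 2 < p) (N : ℤ) :
    |((Finset.univ.filter (fun b : Fin 4 → ZMod p =>
        (∑ i, (b i) ^ 2) = (N : ZMod p) ∧ (∏ i, b i) = -1)).card : ℝ) - (p : ℝ) ^ 2|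
      ≤ 30 * (p : ℝ) ^ ((3 : ℝ) / 2) := by
  have h := L_asymptotic_general two_pos (N : ZMod p) (neg_ne_zero.2 one_ne_zero)
  rw [ZMod.card] at h
  exact h.trans (by gcongr; norm_num)
end

section
/- Let N be an odd integer, d an odd squarefree positive integer, and b₁,…,b₄ integers with d ∣ b₁b₂b₃b₄+1 and d ∣ N − (b₁²+…+b₄²). Define the singular series σ(N,d,b⃗) = ∑_{q=1}^{∞} q^{−4} V_q, where V_q = ∑_{a mod q, gcd(a,q)=1} e(a(b₁²+…+b₄²−N)/q)·∏_{j=1}^4 G(q, ad², 2adb_j). Then σ(N,d,b⃗) = d·∏_{p ∤ 2d, p prime} (1+1/p)(1−1/p^{ξ_p(N)+1}), where ξ_p(N) is the p-adic valuation of N. -/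
/-- `e t = exp(2πit)`. -/
noncomputable def e (t : ℂ) : ℂ := Complex.exp (2 * Real.pi * Complex.I * t)

/-- The Gauss sum `G(q,m,n) = ∑_{x mod q} e((mx²+nx)/q)`. -/
noncomputable def G (q : ℕ) (m n : ℤ) : ℂ :=
  ∑ x ∈ Finset.range q, e (((m * (x : ℤ) ^ 2 + n * (x : ℤ) : ℤ) : ℂ) / (q : ℂ))

/-- `V q = ∑_{a mod q, (a,q)=1} e(a(∑bⱼ²−N)/q)·∏ⱼ G(q, ad², 2adbⱼ)`. -/
noncomputable def V (q : ℕ) (N : ℤ) (d : ℕ) (b : Fin 4 → ℤ) : ℂ :=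
  ∑ a ∈ (Finset.range q).filter (fun a => Nat.Coprime a q),
    e ((((a : ℤ) * ((b 0 ^ 2 + b 1 ^ 2 + b 2 ^ 2 + b 3 ^ 2) - N) : ℤ) : ℂ) / (q : ℂ)) *
      ∏ j : Fin 4, G q ((a : ℤ) * (d : ℤ) ^ 2) (2 * (a : ℤ) * (d : ℤ) * b j)

/-!
Substituting `y_j = d x_j + b_j` identifies `V_q` with the primitive part of the exponential sum
counting solutions of `∑ (d x_j + b_j)² = N` over `ℤ/q`, which is multiplicative in `q`.

If `q` is coprime to `d`, every Gauss sum in `V_q` becomes `g(a) = ∑ e(a x² / q)`. The norm of the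
quaternions shows that `g(ν a)⁴ = g(a)⁴` for every unit `ν` that is a sum of four squares, and by
Lagrange every unit is one, so `V_q = g(1)⁴ c_q(N)` with `c_q` the Ramanujan sum. For odd `q`,
`g(1) g(-1) = q` and `-1` is a sum of two squares, whence `g(1)⁴ = q²`; for `q` a power of `2` one
of the two factors vanishes because `N` is odd. If `q` is a power of a prime `p ∣ d`, then `V_q` is
`q⁴ φ(q)` when `q ∣ d`, and a translation argument shows that it vanishes otherwise. Hence the
local factor at `p ∣ d` is the sum of `φ(p^k)` over the powers `p^k ∣ d`, which is the exact power
of `p` dividing `d`.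
-/

open Finset ArithmeticFunction

lemma quaternion_isUnit_of_isUnit_normSq {R : Type*} [CommRing R] {z : Quaternion R}
    (h : IsUnit (Quaternion.normSq z)) : IsUnit z := by
  have hz := h.map (algebraMap R (Quaternion R))
  rw [Quaternion.algebraMap_def, ← Quaternion.self_mul_star] at hz
  have hcomm : Commute z (star z) :=
    (Quaternion.self_mul_star z).trans (Quaternion.star_mul_self z).symm
  exact (hcomm.isUnit_mul_iff.mp hz).1

section FiniteRing

variable {R S T K : Type*} [CommRing R] [Fintype R] [CommRing S] [Fintype S] [CommRing T]
  [Fintype T] [CommRing K] {ι : Type*} [Fintype ι]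

/-- The quadratic Gauss sum `∑ x, ψ (a x²)` over a finite ring. -/
def quadSum (ψ : AddChar R K) (a : R) : K :=
  ∑ x, ψ (a * x ^ 2)

/-- The quadratic Gauss sum along the progression `c x + b`. -/
def affineQuadSum (ψ : AddChar R K) (a c b : R) : K :=
  ∑ x, ψ (a * (c * x + b) ^ 2)

/-- The sum of `ψ (a (∑ j, (c x j + b j)² - n))` over units `a` and all vectors `x`: the primitive
part of the exponential sum counting the solutions of `∑ j, (c x j + b j)² = n`. The sums over the
coordinates of `x` are kept factored. -/
def quadricSum [DecidableEq R] (ψ : AddChar R K) (n c : R) (b : ι → R) : K :=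
  ∑ a : Rˣ, ψ (-(a * n)) * ∏ j, affineQuadSum ψ a c (b j)

lemma affineQuadSum_of_ringEquiv (f : T ≃+* R × S) {χ : AddChar T K} {ψ : AddChar R K}
    {φ : AddChar S K} (h : ∀ z, χ z = ψ (f z).1 * φ (f z).2) (a c b : T) :
    affineQuadSum χ a c b = affineQuadSum ψ (f a).1 (f c).1 (f b).1 *
      affineQuadSum φ (f a).2 (f c).2 (f b).2 := by
  rw [affineQuadSum, affineQuadSum, affineQuadSum, sum_mul_sum, ← Fintype.sum_prod_type']
  exact Fintype.sum_equiv f.toEquiv _ _ fun x => by simp [h]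

lemma quadricSum_of_ringEquiv [DecidableEq R] [DecidableEq S] [DecidableEq T] (f : T ≃+* R × S)
    {χ : AddChar T K} {ψ : AddChar R K} {φ : AddChar S K}
    (h : ∀ z, χ z = ψ (f z).1 * φ (f z).2) (n c : T) (b : ι → T) :
    quadricSum χ n c b = quadricSum ψ (f n).1 (f c).1 (fun j => (f (b j)).1) *
      quadricSum φ (f n).2 (f c).2 (fun j => (f (b j)).2) := by
  rw [quadricSum, quadricSum, quadricSum, sum_mul_sum, ← Fintype.sum_prod_type']
  refine Fintype.sum_equiv ((Units.mapEquiv f.toMulEquiv).trans MulEquiv.prodUnits).toEquiv _ _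
    fun a => ?_
  simp only [affineQuadSum_of_ringEquiv f h, prod_mul_distrib, h]
  simp [MulEquiv.prodUnits]
  ring

lemma quadricSum_mulShift [DecidableEq R] (ψ : AddChar R K) (u : Rˣ) (n c : R) (b : ι → R) :
    quadricSum (ψ.mulShift u) n c b = quadricSum ψ n c b :=
  Fintype.sum_equiv (Equiv.mulLeft u) _ _ fun a => by
    simp [affineQuadSum, AddChar.mulShift_apply, mul_assoc]

lemma affineQuadSum_of_isUnit (ψ : AddChar R K) (a b : R) {c : R} (hc : IsUnit c) :
    affineQuadSum ψ a c b = quadSum ψ a := by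
  obtain ⟨u, rfl⟩ := hc
  exact Fintype.sum_equiv (u.mulLeft.trans (Equiv.addRight b)) _ _ fun x => by simp

/-- Translating by `t` multiplies each summand by a constant other than `1`. -/
lemma affineQuadSum_eq_zero [IsDomain K] {ψ : AddChar R K} {a c b t : R} (hct : c ^ 2 * t = 0)
    (h : ψ (2 * a * c * t * b) ≠ 1) : affineQuadSum ψ a c b = 0 := by
  have key : affineQuadSum ψ a c b = ψ (2 * a * c * t * b) * affineQuadSum ψ a c b := by
    rw [affineQuadSum, mul_sum]
    refine Fintype.sum_equiv (Equiv.subRight t) _ _ fun x => ?_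
    rw [← AddChar.map_add_eq_mul, Equiv.subRight_apply]
    congr 1
    linear_combination a * (2 * x - t) * hct
  by_contra h0
  exact h (mul_right_cancel₀ h0 (by rw [← key, one_mul]))

lemma quadSum_pow (ψ : AddChar R K) (a : R) (n : ℕ) :
    quadSum ψ a ^ n = ∑ x : Fin n → R, ψ (a * ∑ i, x i ^ 2) := by
  simp only [quadSum, Fintype.sum_pow, mul_sum]
  exact sum_congr rfl fun x _ =>
    (map_prod ψ.toMonoidHom (fun i => Multiplicative.ofAdd (a * x i ^ 2)) univ).symm

/-- A composition law for sums of `n` squares makes the `n`-th power of the Gauss sum invariant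
under scaling by the norm of a unit, because multiplication by that unit permutes the vectors. -/
lemma quadSum_map_unit_mul_pow {A : Type*} [Monoid A] {n : ℕ} (f : A ≃ (Fin n → R)) (ν : A →* R)
    (hν : ∀ x, ν x = ∑ i, f x i ^ 2) (ψ : AddChar R K) (z : Aˣ) (a : R) :
    quadSum ψ (ν z * a) ^ n = quadSum ψ a ^ n := by
  rw [quadSum_pow, quadSum_pow]
  refine Fintype.sum_equiv (f.symm.trans (z.mulLeft.trans f)) _ _ fun x => ?_
  obtain ⟨y, rfl⟩ := f.surjective x
  simp [← hν, mul_left_comm, mul_assoc]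

lemma quadSum_mul_sq (ψ : AddChar R K) (a : R) {s t : R} (h : IsUnit (s ^ 2 + t ^ 2)) :
    quadSum ψ ((s ^ 2 + t ^ 2) * a) ^ 2 = quadSum ψ a ^ 2 := by
  let z : QuadraticAlgebra R (-1) 0 := ⟨s, t⟩
  have hz : z.norm = s ^ 2 + t ^ 2 := by
    simp [z, QuadraticAlgebra.norm_def, sq]
  obtain ⟨u, hu⟩ := QuadraticAlgebra.isUnit_iff_norm_isUnit.mpr (hz ▸ h)
  rw [← hz, ← hu]
  exact quadSum_map_unit_mul_pow
    ((QuadraticAlgebra.equivProd (-1 : R) 0).trans (finTwoArrowEquiv R).symm) _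
    (fun x => by simp [QuadraticAlgebra.norm_def, QuadraticAlgebra.equivProd, sq]) ψ u a

lemma quadSum_mul_pow_four (ψ : AddChar R K) (a : R) {s t v w : R}
    (h : IsUnit (s ^ 2 + t ^ 2 + v ^ 2 + w ^ 2)) :
    quadSum ψ ((s ^ 2 + t ^ 2 + v ^ 2 + w ^ 2) * a) ^ 4 = quadSum ψ a ^ 4 := by
  let z : Quaternion R := ⟨s, t, v, w⟩
  have hz : Quaternion.normSq z = s ^ 2 + t ^ 2 + v ^ 2 + w ^ 2 :=
    Quaternion.normSq_def' z
  obtain ⟨u, hu⟩ := quaternion_isUnit_of_isUnit_normSq (hz ▸ h)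
  rw [← hz, ← hu]
  exact quadSum_map_unit_mul_pow (Quaternion.equivTuple R) (Quaternion.normSq : _ →*₀ R).toMonoidHom
    (fun x => (Quaternion.normSq_def' x).trans (by simp [Fin.sum_univ_four])) ψ u a

lemma quadSum_mul_quadSum_neg [IsDomain K] {ψ : AddChar R K} (hψ : ψ.IsPrimitive)
    (h2 : IsUnit (2 : R)) {a : R} (ha : IsUnit a) :
    quadSum ψ a * quadSum ψ (-a) = Fintype.card R := by
  classical
  let f (x : R × R) : R × R := (x.1 + x.2, x.1 - x.2)
  have hf : f.Bijective := by
    refine Finite.injective_iff_bijective.mp fun x y hxy => ?_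
    simp only [f, Prod.mk.injEq] at hxy
    exact Prod.ext (h2.mul_left_cancel (by linear_combination hxy.1 + hxy.2))
      (h2.mul_left_cancel (by linear_combination hxy.1 - hxy.2))
  calc quadSum ψ a * quadSum ψ (-a)
    _ = ∑ x : R × R, ψ (a * x.1 ^ 2 + -a * x.2 ^ 2) := by
      simp only [quadSum, sum_mul_sum, ← Fintype.sum_prod_type', ← AddChar.map_add_eq_mul]
    _ = ∑ x : R × R, ψ (x.2 * (4 * a * x.1)) := by
      refine (Fintype.sum_equiv (Equiv.ofBijective f hf) _ _ fun x => ?_).symm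
      simp only [f, Equiv.ofBijective_apply]
      congr 1
      ring
    _ = Fintype.card R := by
      have h4 : IsUnit (4 * a) := by simpa [show (4 : R) = 2 * 2 by norm_num] using ⟨h2, ha⟩
      simp [Fintype.sum_prod_type, AddChar.sum_mulShift _ hψ, h4.mul_right_eq_zero]

lemma quadSum_pow_four [IsDomain K] {ψ : AddChar R K} (hψ : ψ.IsPrimitive) (h2 : IsUnit (2 : R))
    {a s t : R} (ha : IsUnit a) (hst : s ^ 2 + t ^ 2 = -1) :
    quadSum ψ a ^ 4 = (Fintype.card R : K) ^ 2 := by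
  have h : quadSum ψ (-a) ^ 2 = quadSum ψ a ^ 2 := by
    simpa [hst] using quadSum_mul_sq ψ a (s := s) (t := t) (hst ▸ isUnit_one.neg)
  calc quadSum ψ a ^ 4 = quadSum ψ a ^ 2 * quadSum ψ (-a) ^ 2 := by rw [h]; ring
    _ = (Fintype.card R : K) ^ 2 := by rw [← mul_pow, quadSum_mul_quadSum_neg hψ h2 ha]

end FiniteRing

section ZModSums

open ZMod

variable {q : ℕ} [NeZero q]

lemma sum_range_natCast_zmod {M : Type*} [AddCommMonoid M] (F : ZMod q → M) :
    ∑ x ∈ range q, F x = ∑ z, F z :=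
  sum_bij' (fun x _ => (x : ZMod q)) (fun z _ => z.val) (by simp) (by simp [ZMod.val_lt])
    (fun _ hx => ZMod.val_cast_of_lt (mem_range.mp hx)) (by simp) (by simp)

lemma sum_range_coprime_natCast_zmod {M : Type*} [AddCommMonoid M] (F : ZMod q → M) :
    ∑ x ∈ range q with x.Coprime q, F x = ∑ u : (ZMod q)ˣ, F u := by
  classical
  calc ∑ x ∈ range q with x.Coprime q, F x = ∑ z with IsUnit z, F z := by
        simp only [sum_filter, ← ZMod.isUnit_iff_coprime]
        exact sum_range_natCast_zmod fun z => if IsUnit z then F z else 0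
    _ = ∑ u : (ZMod q)ˣ, F u := by
        symm
        refine sum_bij (fun u _ => (u : ZMod q)) (fun u _ => by simp)
          (fun _ _ _ _ h => Units.ext h) (fun z hz => ?_) fun _ _ => rfl
        obtain ⟨u, rfl⟩ := (mem_filter.mp hz).2
        exact ⟨u, mem_univ u, rfl⟩

lemma e_intCast_div (z : ℤ) : e (z / q) = stdAddChar (z : ZMod q) := by
  rw [stdAddChar_coe, e, mul_div_assoc]

lemma affineQuadSum_stdAddChar (a d : ℕ) (b : ℤ) :
    affineQuadSum stdAddChar (a : ZMod q) d b =
      stdAddChar ((a * b ^ 2 : ℤ) : ZMod q) * G q (a * d ^ 2) (2 * a * d * b) := by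
  rw [affineQuadSum, G, mul_sum, ← sum_range_natCast_zmod]
  refine sum_congr rfl fun x _ => ?_
  rw [e_intCast_div, ← AddChar.map_add_eq_mul]
  congr 1
  push_cast
  ring

lemma V_eq_quadricSum (n : ℤ) (d : ℕ) (b : Fin 4 → ℤ) :
    V q n d b = quadricSum (stdAddChar (N := q)) n d (fun j => (b j : ZMod q)) := by
  rw [quadricSum, V, ← sum_range_coprime_natCast_zmod (fun a : ZMod q =>
    stdAddChar (-(a * (n : ZMod q))) * ∏ j, affineQuadSum stdAddChar a d (b j : ZMod q))]
  refine sum_congr rfl fun a _ => ?_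
  simp only [affineQuadSum_stdAddChar, prod_mul_distrib]
  rw [← mul_assoc, e_intCast_div]
  congr 1
  simp only [Fin.prod_univ_four, ← AddChar.map_add_eq_mul]
  congr 1
  push_cast
  ring

/-- By Bézout `i m + j k = 1`, the standard character modulo `m k` is the product of the characters
`z ↦ e (j z / m)` and `z ↦ e (i z / k)`. -/
lemma exists_stdAddChar_eq_mulShift_mul_mulShift {m k : ℕ} [NeZero m] [NeZero k]
    (h : m.Coprime k) : ∃ (u : (ZMod m)ˣ) (v : (ZMod k)ˣ), ∀ z : ZMod (m * k),
      stdAddChar z = stdAddChar.mulShift u (chineseRemainder h z).1 *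
        stdAddChar.mulShift v (chineseRemainder h z).2 := by
  obtain ⟨i, j, hij⟩ := Nat.isCoprime_iff_coprime.mpr h
  obtain ⟨u, hu⟩ : IsUnit (j : ZMod m) := IsUnit.of_mul_eq_one (k : ZMod m)
    (by simpa using congrArg (Int.cast : ℤ → ZMod m) hij)
  obtain ⟨v, hv⟩ : IsUnit (i : ZMod k) := IsUnit.of_mul_eq_one (m : ZMod k)
    (by simpa using congrArg (Int.cast : ℤ → ZMod k) hij)
  refine ⟨u, v, fun z => ?_⟩
  obtain ⟨z, rfl⟩ := ZMod.intCast_surjective z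
  simp only [map_intCast, Prod.fst_intCast, Prod.snd_intCast, AddChar.mulShift_apply, hu, hv,
    ← Int.cast_mul, stdAddChar_coe, ← Complex.exp_add]
  congr 1
  have hm : (m : ℂ) ≠ 0 := NeZero.ne _
  have hk : (k : ℂ) ≠ 0 := NeZero.ne _
  have hij' : (i : ℂ) * m + j * k = 1 := mod_cast hij
  push_cast
  field_simp
  linear_combination -(z : ℂ) * hij'

lemma V_mul {m k : ℕ} [NeZero m] [NeZero k] (h : m.Coprime k) (n : ℤ) (d : ℕ)
    (b : Fin 4 → ℤ) : V (m * k) n d b = V m n d b * V k n d b := by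
  obtain ⟨u, v, huv⟩ := exists_stdAddChar_eq_mulShift_mul_mulShift h
  rw [V_eq_quadricSum, V_eq_quadricSum, V_eq_quadricSum, quadricSum_of_ringEquiv _ huv,
    quadricSum_mulShift, quadricSum_mulShift]
  simp

/-- The Ramanujan sum `c_q(n)`. -/
noncomputable def ramanujanSum (q : ℕ) [NeZero q] (n : ℤ) : ℂ :=
  ∑ u : (ZMod q)ˣ, stdAddChar (u * n : ZMod q)

@[simp]
lemma ramanujanSum_one (n : ℤ) : ramanujanSum 1 n = 1 := by
  rw [ramanujanSum, Fintype.sum_unique, Subsingleton.elim (_ * _ : ZMod 1) 0,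
    AddChar.map_zero_eq_one]

lemma sum_stdAddChar_mul_intCast (q : ℕ) [NeZero q] (n : ℤ) :
    ∑ z : ZMod q, stdAddChar (z * (n : ZMod q)) = if (q : ℤ) ∣ n then (q : ℂ) else 0 := by
  have h := AddChar.sum_mulShift (n : ZMod q) (isPrimitive_stdAddChar q)
  simp only [ZMod.intCast_zmod_eq_zero_iff_dvd, ZMod.card] at h
  exact_mod_cast h

lemma sum_units_add_sum_prime_mul {M : Type*} [AddCommMonoid M] {p : ℕ} [Fact p.Prime] (k : ℕ)
    (F : ZMod (p ^ (k + 1)) → M) :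
    ∑ u : (ZMod (p ^ (k + 1)))ˣ, F u + ∑ x ∈ range (p ^ k), F (p * x : ℕ) = ∑ z, F z := by
  have hp : p.Prime := Fact.out
  have hcop (x : ℕ) : ¬ x.Coprime (p ^ (k + 1)) ↔ p ∣ x := by
    rw [Nat.coprime_pow_right_iff k.succ_pos, Nat.coprime_comm, hp.coprime_iff_not_dvd, not_not]
  rw [← sum_range_natCast_zmod, ← sum_range_coprime_natCast_zmod,
    ← sum_filter_add_sum_filter_not (range (p ^ (k + 1))) fun x => x.Coprime (p ^ (k + 1))]
  simp only [hcop]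
  congr 1
  refine sum_bij (fun x _ => p * x) (fun x hx => ?_)
    (fun _ _ _ _ h => Nat.eq_of_mul_eq_mul_left hp.pos h) (fun x hx => ?_) (fun _ _ => rfl)
  · rw [mem_filter, mem_range, pow_succ', Nat.mul_lt_mul_left hp.pos]
    exact ⟨mem_range.mp hx, dvd_mul_right p x⟩
  · rw [mem_filter, mem_range, pow_succ'] at hx
    obtain ⟨hx, y, rfl⟩ := hx
    exact ⟨y, mem_range.mpr (Nat.lt_of_mul_lt_mul_left hx), rfl⟩

lemma ramanujanSum_prime_pow_succ {p : ℕ} [Fact p.Prime] (k : ℕ) (n : ℤ) :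
    ramanujanSum (p ^ (k + 1)) n =
      (if (p : ℤ) ^ (k + 1) ∣ n then (p : ℂ) ^ (k + 1) else 0) -
        (if (p : ℤ) ^ k ∣ n then (p : ℂ) ^ k else 0) := by
  have h := sum_units_add_sum_prime_mul k fun z => stdAddChar (z * (n : ZMod (p ^ (k + 1))))
  have hsub : ∑ x ∈ range (p ^ k),
      stdAddChar (((p * x : ℕ) : ZMod (p ^ (k + 1))) * (n : ZMod (p ^ (k + 1)))) =
        ∑ z : ZMod (p ^ k), stdAddChar (z * (n : ZMod (p ^ k))) := by
    rw [← sum_range_natCast_zmod]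
    refine sum_congr rfl fun x _ => ?_
    have hp : (p : ℂ) ≠ 0 := NeZero.ne _
    simp only [← Int.cast_natCast (R := ZMod _), ← Int.cast_mul, ← e_intCast_div]
    congr 1
    push_cast
    field_simp
    ring
  rw [hsub, sum_stdAddChar_mul_intCast, sum_stdAddChar_mul_intCast] at h
  push_cast at h
  exact eq_sub_of_add_eq h

/-- By Lagrange's theorem every unit modulo `q` is a sum of four squares. -/
lemma quadSum_unit_mul_pow_four {K : Type*} [CommRing K] (ψ : AddChar (ZMod q) K) (u : (ZMod q)ˣ)
    (a : ZMod q) : quadSum ψ (u * a) ^ 4 = quadSum ψ a ^ 4 := by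
  obtain ⟨s, t, v, w, h⟩ := Nat.sum_four_squares (u : ZMod q).val
  have hu : (s ^ 2 + t ^ 2 + v ^ 2 + w ^ 2 : ZMod q) = u := by
    simpa using congrArg (Nat.cast : ℕ → ZMod q) h
  rw [← hu]
  exact quadSum_mul_pow_four ψ a (hu ▸ u.isUnit)

lemma V_of_coprime (n : ℤ) {d : ℕ} (hd : d.Coprime q) (b : Fin 4 → ℤ) :
    V q n d b = quadSum stdAddChar (1 : ZMod q) ^ 4 * ramanujanSum q n := by
  rw [V_eq_quadricSum, quadricSum, ramanujanSum, mul_sum]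
  refine Fintype.sum_equiv (Equiv.neg _) _ _ fun u => ?_
  have h := quadSum_unit_mul_pow_four (stdAddChar (N := q)) u 1
  rw [mul_one] at h
  simp [affineQuadSum_of_isUnit _ _ _ ((ZMod.isUnit_iff_coprime d q).mpr hd), h, mul_comm]

/-- Dirichlet's theorem provides a prime `p ≡ 2 q - 1` modulo `4 q`; being `1` modulo `4`, it is a
sum of two squares. -/
lemma exists_sq_add_sq_eq_neg_one_zmod_of_odd (hq : Odd q) :
    ∃ s t : ZMod q, s ^ 2 + t ^ 2 = -1 := by
  obtain ⟨c, rfl⟩ := hq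
  have hcop : (4 * c + 1).Coprime (4 * (2 * c + 1)) := by
    refine Nat.Coprime.mul_right (by simp) ?_
    rw [Nat.coprime_iff_gcd_eq_one, show 4 * c + 1 = 2 * c + (2 * c + 1) by ring]
    simp
  obtain ⟨p, -, hp, hpc⟩ := Nat.forall_exists_prime_gt_and_modEq 0 (by positivity) hcop
  have : Fact p.Prime := ⟨hp⟩
  have hp4 : p % 4 = (4 * c + 1) % 4 := hpc.of_mul_right (2 * c + 1)
  obtain ⟨s, t, rfl⟩ := Nat.Prime.sq_add_sq (p := p) (by omega)
  refine ⟨s, t, ?_⟩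
  have hst := (ZMod.natCast_eq_natCast_iff _ _ _).mpr (hpc.of_mul_left 4)
  have h0 : ((2 * c + 1 : ℕ) : ZMod (2 * c + 1)) = 0 := ZMod.natCast_self _
  push_cast at hst h0
  linear_combination hst + 2 * h0

lemma V_of_odd_of_coprime (hq : Odd q) (n : ℤ) {d : ℕ} (hd : d.Coprime q) (b : Fin 4 → ℤ) :
    V q n d b = (q : ℂ) ^ 2 * ramanujanSum q n := by
  have h2 : IsUnit (2 : ZMod q) := (ZMod.isUnit_iff_coprime 2 q).mpr (Nat.coprime_two_left.mpr hq)
  obtain ⟨s, t, hst⟩ := exists_sq_add_sq_eq_neg_one_zmod_of_odd hq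
  rw [V_of_coprime n hd, quadSum_pow_four (isPrimitive_stdAddChar q) h2 isUnit_one hst, ZMod.card]

lemma quadSum_stdAddChar_two : quadSum stdAddChar (1 : ZMod 2) = 0 := by
  have hsq (x : ZMod 2) : 1 * x ^ 2 = x * 1 := by
    revert x
    decide
  simp only [quadSum, hsq]
  simpa using AddChar.sum_mulShift (1 : ZMod 2) (isPrimitive_stdAddChar 2)

/-- Modulo `2` the Gauss sum vanishes, and modulo higher powers of `2` the Ramanujan sum does. -/
lemma V_two_pow_succ {n : ℤ} (hn : Odd n) {d : ℕ} (hd : Odd d) (b : Fin 4 → ℤ) (k : ℕ) :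
    V (2 ^ (k + 1)) n d b = 0 := by
  rw [V_of_coprime n ((Nat.coprime_two_right.mpr hd).pow_right _)]
  rcases k with _ | k
  · exact mul_eq_zero_of_left (pow_eq_zero_iff four_ne_zero |>.mpr quadSum_stdAddChar_two) _
  · have h2 (j : ℕ) : ¬ ((2 : ℕ) : ℤ) ^ (j + 1) ∣ n := fun h =>
      Int.two_dvd_ne_zero.mpr (Int.odd_iff.mp hn) ((dvd_pow_self 2 j.succ_ne_zero).trans h)
    rw [ramanujanSum_prime_pow_succ, if_neg (h2 _), if_neg (h2 _), sub_zero, mul_zero]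

lemma V_of_dvd {n : ℤ} {d : ℕ} {b : Fin 4 → ℤ} (hqd : q ∣ d)
    (h : (q : ℤ) ∣ n - (b 0 ^ 2 + b 1 ^ 2 + b 2 ^ 2 + b 3 ^ 2)) :
    V q n d b = (q : ℂ) ^ 4 * q.totient := by
  have hd : (d : ZMod q) = 0 := (ZMod.natCast_eq_zero_iff d q).mpr hqd
  have hn : (n : ZMod q) = b 0 ^ 2 + b 1 ^ 2 + b 2 ^ 2 + b 3 ^ 2 := by
    have := (ZMod.intCast_zmod_eq_zero_iff_dvd _ q).mpr h
    push_cast at this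
    exact sub_eq_zero.mp this
  have hterm (u : (ZMod q)ˣ) : stdAddChar (-(u * n : ZMod q)) *
      ∏ j, affineQuadSum stdAddChar (u : ZMod q) d (b j : ZMod q) = (q : ℂ) ^ 4 := by
    simp only [affineQuadSum, hd, zero_mul, zero_add, sum_const, card_univ, ZMod.card,
      nsmul_eq_mul, prod_mul_distrib, prod_const, Fintype.card_fin, Fin.prod_univ_four]
    rw [mul_left_comm]
    simp [← AddChar.map_add_eq_mul, hn, mul_add, -neg_add_rev]
  rw [V_eq_quadricSum, quadricSum, sum_congr rfl fun u _ => hterm u]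
  simp [ZMod.card_units_eq_totient, mul_comm]

lemma V_prime_pow_of_not_dvd {p k d : ℕ} [Fact p.Prime] (hp2 : p ≠ 2) (hpd : p ∣ d)
    (hkd : ¬ p ^ k ∣ d) (n : ℤ) {b : Fin 4 → ℤ} (hb : ∃ j, ¬ (p : ℤ) ∣ b j) :
    V (p ^ k) n d b = 0 := by
  have hp : p.Prime := Fact.out
  obtain ⟨j, hj⟩ := hb
  obtain ⟨r, c, hc, rfl⟩ := Nat.exists_eq_pow_mul_and_not_dvd
    (n := d) (by rintro rfl; exact hkd (dvd_zero _)) p hp.ne_one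
  have hr : r ≠ 0 := by
    rintro rfl
    exact hc (by simpa using hpd)
  have hrk : r < k := lt_of_not_ge fun h => hkd ((pow_dvd_pow p h).mul_right c)
  have hpow (m : ℕ) : (p ^ m : ZMod (p ^ k)) = 0 ↔ k ≤ m := by
    rw [← Nat.cast_pow, ZMod.natCast_eq_zero_iff, Nat.pow_dvd_pow_iff_le_right hp.one_lt]
  have hunit : IsUnit ((2 * c * b j : ℤ) : ZMod (p ^ k)) := by
    have hpz : Prime (p : ℤ) := Nat.prime_iff_prime_int.mp hp
    rw [ZMod.coe_int_isUnit_iff_isCoprime, Nat.cast_pow]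
    refine (hpz.coprime_iff_not_dvd.mpr ?_).pow_left
    simp only [hpz.dvd_mul, not_or]
    exact ⟨⟨mod_cast (Nat.prime_dvd_prime_iff_eq hp Nat.prime_two).not.mpr hp2, mod_cast hc⟩, hj⟩
  rw [V_eq_quadricSum, quadricSum]
  refine sum_eq_zero fun a _ => mul_eq_zero_of_right _ (prod_eq_zero (mem_univ j)
    (affineQuadSum_eq_zero (t := (p : ZMod (p ^ k)) ^ (k - 2 * r)) ?_ ?_))
  · -- When `k < 2 * r` the truncated difference is `0` and the translation is by `1`.
    have h : (p : ZMod (p ^ k)) ^ (2 * r + (k - 2 * r)) = 0 := (hpow _).mpr (by omega)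
    push_cast
    linear_combination (c : ZMod (p ^ k)) ^ 2 * h
  · rw [← AddChar.map_zero_eq_one (stdAddChar (N := p ^ k)), injective_stdAddChar.ne_iff]
    intro h
    have h' : (a * ((2 * c * b j : ℤ) : ZMod (p ^ k))) * p ^ (r + (k - 2 * r)) = 0 := by
      push_cast at h ⊢
      linear_combination h
    rw [(a.isUnit.mul hunit).mul_right_eq_zero, hpow] at h'
    omega

end ZModSums

section LocalFactors

lemma le_of_multiplicative_of_prime_pow_le {g : ℕ → ℝ} (hg : ∀ n, 0 ≤ g n) (hg1 : g 1 = 1)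
    (hmul : ∀ m n, m.Coprime n → g (m * n) = g m * g n) {M : ℕ} (hM : M ≠ 0)
    (h : ∀ p k, p.Prime → g (p ^ k) ≤ (p ^ M.factorization p : ℕ)) {n : ℕ} (hn : n ≠ 0) :
    g n ≤ M := by
  calc g n = ∏ p ∈ n.primeFactors, g (p ^ n.factorization p) :=
        Nat.multiplicative_factorization g hmul hg1 hn
    _ ≤ ∏ p ∈ n.primeFactors, ((p ^ M.factorization p : ℕ) : ℝ) :=
        prod_le_prod (fun _ _ => hg _) fun p hp => h p _ (Nat.prime_of_mem_primeFactors hp)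
    _ ≤ M := by
        rw [← Nat.cast_prod, Nat.cast_le]
        conv_rhs => rw [← Nat.prod_factorization_pow_eq_self hM]
        rw [Finsupp.prod_of_support_subset _ (s := n.primeFactors ∪ M.primeFactors)
          subset_union_right _ fun p _ => pow_zero p]
        refine prod_le_prod_of_subset_of_one_le' subset_union_left fun p hp _ => ?_
        exact Nat.one_le_iff_ne_zero.mpr (pow_ne_zero _ (by rintro rfl; simp at hp))

lemma hasSum_ite_pow_dvd {M : Type*} [AddCommMonoid M] [TopologicalSpace M] {p : ℕ}
    (hp : p.Prime) {n : ℕ} (hn : n ≠ 0) (f : ℕ → M) :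
    HasSum (fun k => if p ^ k ∣ n then f k else 0) (∑ k ∈ range (n.factorization p + 1), f k) := by
  have h (k : ℕ) : p ^ k ∣ n ↔ k ∈ range (n.factorization p + 1) := by
    rw [hp.pow_dvd_iff_le_factorization hn, mem_range, Nat.lt_succ_iff]
  simp only [h]
  rw [sum_congr rfl fun k hk => (if_pos hk).symm]
  exact hasSum_sum_of_ne_finset_zero fun k hk => if_neg hk

lemma sum_totient_prime_pow {p : ℕ} (hp : p.Prime) (m : ℕ) :
    ∑ k ∈ range (m + 1), (p ^ k).totient = p ^ m := by
  rw [← Nat.sum_divisors_prime_pow hp, Nat.sum_totient]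

lemma norm_ramanujanSum_prime_pow_le {p : ℕ} [Fact p.Prime] {n : ℤ} (hn : n ≠ 0) (k : ℕ) :
    ‖ramanujanSum (p ^ k) n‖ ≤ (p ^ n.natAbs.factorization p : ℕ) := by
  have hp : p.Prime := Fact.out
  have hle {j : ℕ} (h : (p : ℤ) ^ j ∣ n) : (p : ℝ) ^ j ≤ (p ^ n.natAbs.factorization p : ℕ) := by
    rw [← Int.natCast_pow, Int.natCast_dvd, hp.pow_dvd_iff_le_factorization (by simpa)] at h
    exact_mod_cast pow_le_pow_right₀ hp.one_le h
  have h1 : (1 : ℝ) ≤ p := mod_cast hp.one_le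
  rcases k with _ | k
  · simpa using hle (j := 0) (by simp)
  rw [ramanujanSum_prime_pow_succ]
  by_cases hk1 : (p : ℤ) ^ (k + 1) ∣ n
  · rw [if_pos hk1, if_pos ((pow_dvd_pow _ k.le_succ).trans hk1)]
    have := hle hk1
    have h : (p : ℝ) ^ k ≤ p ^ (k + 1) := pow_le_pow_right₀ h1 k.le_succ
    rw [show ((p : ℂ) ^ (k + 1) - p ^ k) = ((p ^ (k + 1) - p ^ k : ℝ) : ℂ) by push_cast; rfl,
      Complex.norm_of_nonneg (sub_nonneg.mpr h)]
    linarith [pow_nonneg (zero_le_one.trans h1) k]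
  · rw [if_neg hk1, zero_sub, norm_neg]
    split_ifs with hk
    · simpa using hle hk
    · simp

/-- The term `q⁻⁴ V_q` of the singular series. -/
noncomputable def seriesTerm (N : ℤ) (d : ℕ) (b : Fin 4 → ℤ) : ArithmeticFunction ℂ :=
  ⟨fun q => (q : ℂ) ^ (-(4 : ℤ)) * V q N d b, by simp [V]⟩

variable {N : ℤ} {d : ℕ} {b : Fin 4 → ℤ} {p : ℕ} [Fact p.Prime]

lemma seriesTerm_apply (q : ℕ) : seriesTerm N d b q = (q : ℂ) ^ (-(4 : ℤ)) * V q N d b :=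
  rfl

lemma isMultiplicative_seriesTerm : (seriesTerm N d b).IsMultiplicative := by
  refine IsMultiplicative.iff_ne_zero.mpr ⟨by simp [seriesTerm_apply, V, G, e], ?_⟩
  intro m k hm hk hmk
  have : NeZero m := ⟨hm⟩
  have : NeZero k := ⟨hk⟩
  rw [seriesTerm_apply, V_mul hmk, Nat.cast_mul, mul_zpow, seriesTerm_apply, seriesTerm_apply]
  ring

lemma seriesTerm_prime_pow_of_dvd (hN : Odd N) (hd : Odd d)
    (hNb : (d : ℤ) ∣ N - (b 0 ^ 2 + b 1 ^ 2 + b 2 ^ 2 + b 3 ^ 2))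
    (hb : ∀ p : ℕ, p.Prime → p ∣ d → ∃ j, ¬ (p : ℤ) ∣ b j) (hpd : p ∣ 2 * d) (k : ℕ) :
    seriesTerm N d b (p ^ k) = if p ^ k ∣ d then ((p ^ k).totient : ℂ) else 0 := by
  have hp : p.Prime := Fact.out
  rw [seriesTerm_apply]
  split_ifs with hk
  · have hpk : ((p ^ k : ℕ) : ℂ) ≠ 0 := NeZero.ne _
    rw [V_of_dvd hk ((Int.natCast_dvd_natCast.mpr hk).trans hNb), zpow_neg]
    exact inv_mul_cancel_left₀ (zpow_ne_zero 4 hpk) _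
  by_cases hpd' : p ∣ d
  · have hp2 : p ≠ 2 := by
      rintro rfl
      exact hd.not_two_dvd_nat hpd'
    rw [V_prime_pow_of_not_dvd hp2 hpd' hk N (hb p hp hpd'), mul_zero]
  · obtain rfl := (Nat.prime_dvd_prime_iff_eq hp Nat.prime_two).mp
      ((hp.dvd_mul.mp hpd).resolve_right hpd')
    obtain ⟨k, rfl⟩ := Nat.exists_eq_succ_of_ne_zero (n := k) (by rintro rfl; simp at hk)
    rw [V_two_pow_succ hN hd, mul_zero]

lemma seriesTerm_prime_pow_of_not_dvd (hpd : ¬ p ∣ 2 * d) (k : ℕ) :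
    seriesTerm N d b (p ^ k) = (((p ^ k : ℕ) : ℂ) ^ 2)⁻¹ * ramanujanSum (p ^ k) N := by
  have hp : p.Prime := Fact.out
  have hodd : Odd p := hp.odd_of_ne_two fun h => hpd (h ▸ dvd_mul_right _ _)
  have hcop : d.Coprime (p ^ k) :=
    (hp.coprime_iff_not_dvd.mpr fun h => hpd (h.mul_left 2)).symm.pow_right k
  have hpk : ((p ^ k : ℕ) : ℂ) ≠ 0 := NeZero.ne _
  rw [seriesTerm_apply, V_of_odd_of_coprime hodd.pow N hcop, zpow_neg]
  field_simp

lemma tsum_seriesTerm_prime_pow_of_dvd (hN : Odd N) (hd : Odd d)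
    (hNb : (d : ℤ) ∣ N - (b 0 ^ 2 + b 1 ^ 2 + b 2 ^ 2 + b 3 ^ 2))
    (hb : ∀ p : ℕ, p.Prime → p ∣ d → ∃ j, ¬ (p : ℤ) ∣ b j) (hpd : p ∣ 2 * d) :
    ∑' k, seriesTerm N d b (p ^ k) = (p : ℂ) ^ d.factorization p := by
  have hp : p.Prime := Fact.out
  simp only [seriesTerm_prime_pow_of_dvd hN hd hNb hb hpd]
  rw [(hasSum_ite_pow_dvd hp hd.pos.ne' _).tsum_eq]
  exact_mod_cast sum_totient_prime_pow hp _

lemma tsum_seriesTerm_prime_pow_of_not_dvd (hN : N ≠ 0) (hpd : ¬ p ∣ 2 * d) :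
    ∑' k, seriesTerm N d b (p ^ k) =
      (1 + 1 / (p : ℂ)) * (1 - 1 / (p : ℂ) ^ (N.natAbs.factorization p + 1)) := by
  have hp0 : (p : ℂ) ≠ 0 := NeZero.ne _
  set x : ℂ := 1 / p with hx
  let t (k : ℕ) : ℂ := if p ^ k ∣ N.natAbs then x ^ k else 0
  have ht : HasSum t (∑ k ∈ range (N.natAbs.factorization p + 1), x ^ k) :=
    hasSum_ite_pow_dvd Fact.out (by simpa) _
  have hsucc (k : ℕ) : seriesTerm N d b (p ^ (k + 1)) = t (k + 1) - x ^ 2 * t k := by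
    rw [seriesTerm_prime_pow_of_not_dvd hpd, ramanujanSum_prime_pow_succ]
    simp only [← Int.natCast_pow, Int.natCast_dvd, t, hx, one_div, inv_pow]
    push_cast
    split_ifs <;> field_simp <;> ring
  have hone : seriesTerm N d b (p ^ 0) = t 0 := by
    simp [t, isMultiplicative_seriesTerm.map_one]
  have hsum := (hasSum_nat_add_iff 1 (f := fun k => seriesTerm N d b (p ^ k))).mp
    ((((hasSum_nat_add_iff' 1).mpr ht).sub (ht.mul_left (x ^ 2))).congr_fun hsucc)
  rw [hsum.tsum_eq, sum_range_one, sum_range_one, hone, ← one_div_pow, ← mul_neg_geom_sum]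
  ring

lemma tsum_seriesTerm_prime_pow (hN : Odd N) (hd : Odd d)
    (hNb : (d : ℤ) ∣ N - (b 0 ^ 2 + b 1 ^ 2 + b 2 ^ 2 + b 3 ^ 2))
    (hb : ∀ p : ℕ, p.Prime → p ∣ d → ∃ j, ¬ (p : ℤ) ∣ b j) :
    ∑' k, seriesTerm N d b (p ^ k) = (p : ℂ) ^ d.factorization p *
      if p ∣ 2 * d then 1
      else (1 + 1 / (p : ℂ)) * (1 - 1 / (p : ℂ) ^ (N.natAbs.factorization p + 1)) := by
  split_ifs with hpd
  · rw [tsum_seriesTerm_prime_pow_of_dvd hN hd hNb hb hpd, mul_one]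
  · have hpd' : ¬ p ∣ d := fun h => hpd (h.mul_left 2)
    have hN0 : N ≠ 0 := by rintro rfl; simp at hN
    rw [tsum_seriesTerm_prime_pow_of_not_dvd hN0 hpd, Nat.factorization_eq_zero_of_not_dvd hpd',
      pow_zero, one_mul]

lemma norm_seriesTerm_prime_pow_mul_sq_le (hN : Odd N) (hd : Odd d)
    (hNb : (d : ℤ) ∣ N - (b 0 ^ 2 + b 1 ^ 2 + b 2 ^ 2 + b 3 ^ 2))
    (hb : ∀ p : ℕ, p.Prime → p ∣ d → ∃ j, ¬ (p : ℤ) ∣ b j) (k : ℕ) :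
    ‖seriesTerm N d b (p ^ k)‖ * ((p ^ k : ℕ) : ℝ) ^ 2 ≤
      (p ^ (N.natAbs * d ^ 3).factorization p : ℕ) := by
  have hp : p.Prime := Fact.out
  have hN0 : N ≠ 0 := by rintro rfl; simp at hN
  have hfac : (N.natAbs * d ^ 3).factorization p =
      N.natAbs.factorization p + 3 * d.factorization p := by
    rw [Nat.factorization_mul (by simpa) (pow_ne_zero 3 hd.pos.ne'), Nat.factorization_pow]
    simp
  by_cases hpd : p ∣ 2 * d
  · rw [seriesTerm_prime_pow_of_dvd hN hd hNb hb hpd]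
    split_ifs with hk
    · rw [hp.pow_dvd_iff_le_factorization hd.pos.ne'] at hk
      rw [Complex.norm_natCast]
      norm_cast
      calc (p ^ k).totient * (p ^ k) ^ 2 ≤ p ^ k * (p ^ k) ^ 2 := by
            gcongr
            exact Nat.totient_le _
        _ = p ^ (3 * k) := by ring
        _ ≤ p ^ (N.natAbs * d ^ 3).factorization p := Nat.pow_le_pow_right hp.pos (by omega)
    · simp
  · have hpk : ((p ^ k : ℕ) : ℝ) ≠ 0 := NeZero.ne _
    calc ‖seriesTerm N d b (p ^ k)‖ * ((p ^ k : ℕ) : ℝ) ^ 2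
      _ = ‖ramanujanSum (p ^ k) N‖ := by
        rw [seriesTerm_prime_pow_of_not_dvd hpd, norm_mul, norm_inv, norm_pow, Complex.norm_natCast]
        field_simp
      _ ≤ (p ^ N.natAbs.factorization p : ℕ) := norm_ramanujanSum_prime_pow_le hN0 k
      _ ≤ _ := mod_cast Nat.pow_le_pow_right hp.pos (by omega)

lemma summable_norm_seriesTerm (hN : Odd N) (hd : Odd d)
    (hNb : (d : ℤ) ∣ N - (b 0 ^ 2 + b 1 ^ 2 + b 2 ^ 2 + b 3 ^ 2))
    (hb : ∀ p : ℕ, p.Prime → p ∣ d → ∃ j, ¬ (p : ℤ) ∣ b j) :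
    Summable fun q => ‖seriesTerm N d b q‖ := by
  have hN0 : N ≠ 0 := by rintro rfl; simp at hN
  have hM : N.natAbs * d ^ 3 ≠ 0 := mul_ne_zero (by simpa) (pow_ne_zero 3 hd.pos.ne')
  refine Summable.of_nonneg_of_le (fun _ => norm_nonneg _) (fun q => ?_)
    ((Real.summable_one_div_nat_pow.mpr one_lt_two).mul_left ((N.natAbs * d ^ 3 : ℕ) : ℝ))
  rcases eq_or_ne q 0 with rfl | hq
  · simp
  rw [mul_one_div, le_div_iff₀ (by positivity)]
  refine le_of_multiplicative_of_prime_pow_le (g := fun q => ‖seriesTerm N d b q‖ * (q : ℝ) ^ 2)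
    (fun q => by positivity) (by simp [isMultiplicative_seriesTerm.map_one]) (fun m n hmn => ?_) hM
    (fun p k hp => ?_) hq
  · simp only [isMultiplicative_seriesTerm.map_mul_of_coprime hmn, norm_mul, Nat.cast_mul, mul_pow]
    ring
  · have : Fact p.Prime := ⟨hp⟩
    exact norm_seriesTerm_prime_pow_mul_sq_le hN hd hNb hb k

end LocalFactors

lemma hasProd_inv_pow_factorization {d : ℕ} (hd : d ≠ 0) :
    HasProd (fun p : Nat.Primes => ((p : ℂ) ^ d.factorization p)⁻¹) (d : ℂ)⁻¹ := by
  let f (p : ℕ) : ℂ := ((p : ℂ) ^ d.factorization p)⁻¹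
  have hf : ∀ p ∉ d.primeFactors, f p = 1 := fun p hp => by
    simp [f, (Finsupp.notMem_support_iff (f := d.factorization)).mp hp]
  have hprod : ∏ p ∈ d.primeFactors, f p = (d : ℂ)⁻¹ := by
    rw [prod_inv_distrib]
    exact_mod_cast congrArg (fun n : ℕ => (n : ℂ)⁻¹) (Nat.prod_factorization_pow_eq_self hd)
  rw [← hprod]
  refine (hasProd_subtype_iff_of_mulSupport_subset (s := {p : ℕ | p.Prime}) ?_).mpr
    (hasProd_prod_of_ne_finset_one hf)
  exact (Function.mulSupport_subset_iff'.mpr hf).trans fun p => Nat.prime_of_mem_primeFactors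

theorem singular_series_eval_general (N : ℤ) (hN : Odd N) (d : ℕ) (hd : Odd d) (b : Fin 4 → ℤ)
    (hb : ∀ p : ℕ, p.Prime → p ∣ d → ∃ j, ¬ (p : ℤ) ∣ b j)
    (hNb : (d : ℤ) ∣ N - (b 0 ^ 2 + b 1 ^ 2 + b 2 ^ 2 + b 3 ^ 2)) :
    ∑' q : ℕ+, ((q : ℕ) : ℂ) ^ (-(4 : ℤ)) * V q N d b =
      d * ∏' p : {p : ℕ // p.Prime ∧ ¬ p ∣ 2 * d},
        (1 + 1 / (p : ℂ)) * (1 - 1 / (p : ℂ) ^ (N.natAbs.factorization p + 1)) := by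
  let L (p : ℕ) : ℂ := (1 + 1 / (p : ℂ)) * (1 - 1 / (p : ℂ) ^ (N.natAbs.factorization p + 1))
  have hfactor (p : Nat.Primes) : (∑' k, seriesTerm N d b (p ^ k)) *
      ((p : ℂ) ^ d.factorization p)⁻¹ = if (p : ℕ) ∣ 2 * d then 1 else L p := by
    have : Fact (p : ℕ).Prime := ⟨p.2⟩
    rw [tsum_seriesTerm_prime_pow hN hd hNb hb, mul_right_comm,
      mul_inv_cancel₀ (pow_ne_zero _ (NeZero.ne _)), one_mul]
  have hEuler := (isMultiplicative_seriesTerm.eulerProduct_hasProd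
    (summable_norm_seriesTerm hN hd hNb hb)).mul (hasProd_inv_pow_factorization hd.pos.ne')
  simp only [hfactor] at hEuler
  let i (p : {p : ℕ // p.Prime ∧ ¬ p ∣ 2 * d}) : Nat.Primes := ⟨p, p.2.1⟩
  have hi : i.Injective := fun p p' h => Subtype.ext (congrArg (Subtype.val (p := Nat.Prime)) h)
  rw [← hi.hasProd_iff fun p hp => if_pos (by_contra fun h => hp ⟨⟨p, p.2, h⟩, rfl⟩)] at hEuler
  have hL := (hEuler.congr_fun fun p => (if_neg p.2.2).symm).tprod_eq
  rw [hL, mul_comm, inv_mul_cancel_right₀ (Nat.cast_ne_zero.mpr hd.pos.ne')]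
  exact tsum_pnat_eq_tsum_of_eq_zero (seriesTerm N d b).map_zero

/-- the singular series σ(N,d,b⃗) = ∑_{q≥1} q⁻⁴ V_q equals
d·∏_{p ∤ 2d} (1+1/p)(1−1/p^{ξ_p(N)+1}). -/
theorem singular_series_eval (N : ℕ) (hN : Odd N) (d : ℕ) (hd : Odd d)
    (hsq : Squarefree d) (b : Fin 4 → ℤ)
    (h1 : (d : ℤ) ∣ (b 0 * b 1 * b 2 * b 3 + 1))
    (h2 : (d : ℤ) ∣ ((N : ℤ) - (b 0 ^ 2 + b 1 ^ 2 + b 2 ^ 2 + b 3 ^ 2))) :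
    ∑' q : ℕ+, ((q : ℕ) : ℂ) ^ (-(4 : ℤ)) * V (q : ℕ) (N : ℤ) d b =
      (d : ℂ) * ∏' p : {p : ℕ // p.Prime ∧ ¬ (p : ℕ) ∣ 2 * d},
        (1 + 1 / ((p : ℕ) : ℂ)) * (1 - 1 / ((p : ℕ) : ℂ) ^ (N.factorization (p : ℕ) + 1)) := by
  refine singular_series_eval_general N (mod_cast hN) d hd b (fun p hp hpd => ⟨0, fun hb => ?_⟩) h2
  have h := (Int.dvd_add_right (hb.mul_right (b 1 * b 2 * b 3))).mp
    (by simpa [mul_assoc] using (Int.natCast_dvd_natCast.mpr hpd).trans h1)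
  exact (Nat.prime_iff_prime_int.mp hp).not_dvd_one h
end
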